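/- arXiv:1303.1152 — 6 statements merged into one kernel-verified Lean document; each statement's English description precedes it below -/
import Mathlib

section
/- Strong duality for the ℓ2-loss soft-margin SVM: the infimum over all (w̄, ρ, ξ) ∈ ℝ^d × ℝ × ℝⁿ satisfying y_i·⟨w̄, X_i⟩ ≥ ρ − ξ_i for all i ∈ [1..n] of the objective (1/2)‖w̄‖₂² − ρ + (C/2)Σ_i ξ_i² equals −(1/2)·min over α in the unit simplex Δ of αᵀ(ZᵀZ + (1/C)I_n)α, where Z is the d×n matrix with columns Z_i := y_i X_i. Equivalently, the dual optimal value is (up to the factor −1/2) the value min_{α∈Δ} ‖Aα‖₂² of the SVM problem with extended data matrix A := (Z ; (1/√C)I_n) ∈ ℝ^{(d+n)×n}. -/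
open Matrix BigOperators

/-- Euclidean norm of a vector over a finite index type. -/
noncomputable def l2 {ι : Type*} [Fintype ι] (v : ι → ℝ) : ℝ := Real.sqrt (∑ k, v k ^ 2)

/-! The slack variables of the soft-margin problem can be absorbed into the weight vector:
`u = (w̄, √C ξ)` turns it into the hard-margin problem for the columns `aᵢ` of the extended matrix
`A = (Z ; (1/√C) I)`. For that problem, let `p = Aα` be the point of minimal norm in the convex hull
of the `aᵢ`. The variational inequality `‖p‖² ≤ ⟪p, aᵢ⟫` says that `(p, ‖p‖²)` is primal feasible;
its objective value `-‖p‖²/2` matches the lower bound that weak duality derives from `α`. -/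

open scoped InnerProductSpace

section HardMargin

variable {E : Type*} [NormedAddCommGroup E] [InnerProductSpace ℝ E]

lemma exists_mem_forall_norm_sq_le_inner_of_isComplete {K : Set E} (hK : IsComplete K)
    (hconv : Convex ℝ K) (hne : K.Nonempty) : ∃ p ∈ K, ∀ x ∈ K, ‖p‖ ^ 2 ≤ ⟪p, x⟫_ℝ := by
  obtain ⟨p, hp, hmin⟩ := exists_norm_eq_iInf_of_complete_convex hne hK hconv 0
  refine ⟨p, hp, fun x hx => ?_⟩
  have hvar := (norm_eq_iInf_iff_real_inner_le_zero hconv hp).1 hmin x hx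
  rwa [zero_sub, inner_neg_left, inner_sub_right, real_inner_self_eq_norm_sq, neg_nonpos,
    sub_nonneg] at hvar

variable {ι : Type*}

/-- The values `‖w‖²/2 - ρ` of the hard-margin SVM primal problem over its feasible pairs `(w, ρ)`,
for datapoints `a i` that already carry their labels. -/
def hardMarginPrimalValues (a : ι → E) : Set ℝ :=
  {v | ∃ (w : E) (ρ : ℝ), (∀ i, ρ ≤ ⟪w, a i⟫_ℝ) ∧ v = (1 / 2) * ‖w‖ ^ 2 - ρ}

variable [Fintype ι]

/-- The squared norms of the convex combinations of the datapoints `a i`. The hard-margin SVM dual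
problem maximises `-1/2` times these values. -/
def hardMarginDualValues (a : ι → E) : Set ℝ :=
  {v | ∃ α ∈ stdSimplex ℝ ι, v = ‖∑ i, α i • a i‖ ^ 2}

lemma exists_mem_stdSimplex_forall_norm_sq_le_inner [Nonempty ι] (a : ι → E) :
    ∃ α ∈ stdSimplex ℝ ι, ∀ i, ‖∑ j, α j • a j‖ ^ 2 ≤ ⟪∑ j, α j • a j, a i⟫_ℝ := by
  classical
  let L := Fintype.linearCombination ℝ a
  have hcompact : IsCompact (L '' stdSimplex ℝ ι) :=
    (isCompact_stdSimplex ℝ ι).image L.continuous_on_pi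
  have hvertex (i : ι) : a i ∈ L '' stdSimplex ℝ ι :=
    ⟨Pi.single i 1, single_mem_stdSimplex ℝ i, by simp [L]⟩
  obtain ⟨_, ⟨α, hα, rfl⟩, hmin⟩ :=
    exists_mem_forall_norm_sq_le_inner_of_isComplete hcompact.isComplete
      ((convex_stdSimplex ℝ ι).linear_image L) ⟨_, hvertex (Classical.arbitrary ι)⟩
  exact ⟨α, hα, fun i => hmin _ (hvertex i)⟩

lemma le_inner_sum_smul_of_forall_le_inner {a : ι → E} {w : E} {ρ : ℝ}
    (hw : ∀ i, ρ ≤ ⟪w, a i⟫_ℝ) {α : ι → ℝ} (hα : α ∈ stdSimplex ℝ ι) :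
    ρ ≤ ⟪w, ∑ i, α i • a i⟫_ℝ :=
  calc ρ = ∑ i, α i * ρ := by rw [← Finset.sum_mul, hα.2, one_mul]
    _ ≤ ∑ i, α i * ⟪w, a i⟫_ℝ :=
      Finset.sum_le_sum fun i _ => mul_le_mul_of_nonneg_left (hw i) (hα.1 i)
    _ = ⟪w, ∑ i, α i • a i⟫_ℝ := by simp only [inner_sum, real_inner_smul_right]

lemma hardMargin_weak_duality {a : ι → E} {v q : ℝ} (hv : v ∈ hardMarginPrimalValues a)
    (hq : q ∈ hardMarginDualValues a) : -(1 / 2) * q ≤ v := by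
  obtain ⟨w, ρ, hw, rfl⟩ := hv
  obtain ⟨α, hα, rfl⟩ := hq
  have hρ := le_inner_sum_smul_of_forall_le_inner hw hα
  have hsq := norm_sub_sq_real w (∑ i, α i • a i)
  linarith [sq_nonneg ‖w - ∑ i, α i • a i‖]

theorem hardMargin_strong_duality [Nonempty ι] (a : ι → E) :
    ∃ m, IsLeast (hardMarginPrimalValues a) (-(1 / 2) * m) ∧
      IsLeast (hardMarginDualValues a) m := by
  obtain ⟨α, hα, hvar⟩ := exists_mem_stdSimplex_forall_norm_sq_le_inner a
  set p := ∑ i, α i • a i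
  have hprimal : -(1 / 2) * ‖p‖ ^ 2 ∈ hardMarginPrimalValues a := ⟨p, ‖p‖ ^ 2, hvar, by ring⟩
  have hdual : ‖p‖ ^ 2 ∈ hardMarginDualValues a := ⟨α, hα, rfl⟩
  refine ⟨‖p‖ ^ 2, ⟨hprimal, fun v hv => hardMargin_weak_duality hv hdual⟩, hdual, fun q hq => ?_⟩
  linarith [hardMargin_weak_duality hprimal hq]

end HardMargin

section SoftMargin

variable {κ ι : Type*}

/-- The extended data matrix `A = (Z ; (1/√C) I)` of the soft-margin SVM. -/
noncomputable def softMarginMatrix [DecidableEq ι] (C : ℝ) (Z : Matrix κ ι ℝ) :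
    Matrix (κ ⊕ ι) ι ℝ :=
  fromRows Z ((1 / Real.sqrt C) • (1 : Matrix ι ι ℝ))

variable [Fintype κ] [Fintype ι]

/-- The values `‖w‖²/2 - ρ + (C/2)‖ξ‖²` of the `ℓ2`-loss soft-margin SVM primal problem over its
feasible triples `(w, ρ, ξ)`; the columns of `Z` are the datapoints multiplied by their labels. -/
def softMarginPrimalValues (C : ℝ) (Z : Matrix κ ι ℝ) : Set ℝ :=
  {v | ∃ (w : κ → ℝ) (ρ : ℝ) (ξ : ι → ℝ), (∀ i, ρ - ξ i ≤ (w ᵥ* Z) i) ∧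
    v = (1 / 2) * ∑ k, w k ^ 2 - ρ + (C / 2) * ∑ i, ξ i ^ 2}

lemma norm_sq_sum_smul_toLp_col (A : Matrix κ ι ℝ) (α : ι → ℝ) :
    ‖∑ i, α i • WithLp.toLp 2 (A.col i)‖ ^ 2 = ∑ k, (A *ᵥ α) k ^ 2 := by
  simp [EuclideanSpace.real_norm_sq_eq, mulVec, dotProduct, mul_comm]

lemma dotProduct_transpose_mul_self_mulVec (A : Matrix κ ι ℝ) (α : ι → ℝ) :
    α ⬝ᵥ ((Aᵀ * A) *ᵥ α) = ∑ k, (A *ᵥ α) k ^ 2 := by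
  rw [← mulVec_mulVec, dotProduct_mulVec, vecMul_transpose]
  simp only [dotProduct, sq]

variable [DecidableEq ι]

lemma softMarginMatrix_transpose_mul_self {C : ℝ} (hC : 0 ≤ C) (Z : Matrix κ ι ℝ) :
    (softMarginMatrix C Z)ᵀ * softMarginMatrix C Z = Zᵀ * Z + (1 / C) • (1 : Matrix ι ι ℝ) := by
  have hsq : 1 / Real.sqrt C * (1 / Real.sqrt C) = 1 / C := by
    rw [div_mul_div_comm, one_mul, Real.mul_self_sqrt hC]
  rw [softMarginMatrix, transpose_fromRows, fromCols_mul_fromRows, transpose_smul, transpose_one,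
    smul_mul_smul_comm, one_mul, hsq]

lemma inner_toLp_col_softMarginMatrix (C : ℝ) (Z : Matrix κ ι ℝ) (u : EuclideanSpace ℝ (κ ⊕ ι))
    (i : ι) :
    ⟪u, WithLp.toLp 2 ((softMarginMatrix C Z).col i)⟫_ℝ =
      ((fun k => u (.inl k)) ᵥ* Z) i + u (.inr i) / Real.sqrt C := by
  simp [PiLp.inner_apply, softMarginMatrix, vecMul, dotProduct, one_apply, mul_comm, div_eq_mul_inv]

lemma softMarginPrimalValues_eq_hardMarginPrimalValues {C : ℝ} (hC : 0 < C) (Z : Matrix κ ι ℝ) :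
    softMarginPrimalValues C Z =
      hardMarginPrimalValues fun i => WithLp.toLp 2 ((softMarginMatrix C Z).col i) := by
  ext v
  simp only [softMarginPrimalValues, hardMarginPrimalValues, Set.mem_ofPred_eq,
    inner_toLp_col_softMarginMatrix, EuclideanSpace.real_norm_sq_eq, Fintype.sum_sum_type]
  constructor
  · rintro ⟨w, ρ, ξ, hfeas, rfl⟩
    refine ⟨WithLp.toLp 2 (Sum.elim w (Real.sqrt C • ξ)), ρ, fun i => ?_, ?_⟩
    · have hξ : Real.sqrt C * ξ i / Real.sqrt C = ξ i :=
        mul_div_cancel_left₀ _ (Real.sqrt_pos.2 hC).ne'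
      simpa [hξ] using hfeas i
    · simp only [Sum.elim_inl, Sum.elim_inr, Pi.smul_apply, smul_eq_mul, mul_pow,
        Real.sq_sqrt hC.le, ← Finset.mul_sum]
      ring
  · rintro ⟨u, ρ, hfeas, rfl⟩
    refine ⟨fun k => u (.inl k), ρ, fun i => u (.inr i) / Real.sqrt C,
      fun i => sub_le_iff_le_add.2 (hfeas i), ?_⟩
    simp only [div_pow, Real.sq_sqrt hC.le, ← Finset.sum_div]
    field_simp
    ring

theorem soft_margin_strong_duality_general [Nonempty ι] {C : ℝ} (hC : 0 < C) (Z : Matrix κ ι ℝ) :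
    ∃ m, IsLeast (softMarginPrimalValues C Z) (-(1 / 2) * m) ∧
      IsLeast {v | ∃ α ∈ stdSimplex ℝ ι,
        v = α ⬝ᵥ ((Zᵀ * Z + (1 / C) • (1 : Matrix ι ι ℝ)) *ᵥ α)} m ∧
      IsLeast {v | ∃ α ∈ stdSimplex ℝ ι, v = ∑ k, (softMarginMatrix C Z *ᵥ α) k ^ 2} m := by
  simp only [← softMarginMatrix_transpose_mul_self hC.le, dotProduct_transpose_mul_self_mulVec,
    and_self, softMarginPrimalValues_eq_hardMarginPrimalValues hC, ← norm_sq_sum_smul_toLp_col]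
  exact hardMargin_strong_duality _

end SoftMargin

/-- Strong duality for the ℓ2-loss soft-margin SVM: the infimum of the primal objective
`(1/2)‖w̄‖² − ρ + (C/2)Σᵢ ξᵢ²` over all feasible `(w̄, ρ, ξ)` equals
`−(1/2) · min_{α ∈ Δ} αᵀ(ZᵀZ + (1/C)I_n)α`; moreover the latter minimum expression equals
`min_{α ∈ Δ} ‖Aα‖₂²` for the extended matrix `A = (Z ; (1/√C)I_n)`. -/
theorem soft_margin_strong_duality {d n : ℕ} (hn : 0 < n) (C : ℝ) (hC : 0 < C)
    (X : Fin n → Fin d → ℝ) (y : Fin n → ℝ) (hy : ∀ i, y i = 1 ∨ y i = -1) :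
    let Z : Matrix (Fin d) (Fin n) ℝ := Matrix.of fun k i => y i * X i k
    let A : Matrix (Fin d ⊕ Fin n) (Fin n) ℝ :=
      Matrix.fromRows Z ((1 / Real.sqrt C) • (1 : Matrix (Fin n) (Fin n) ℝ))
    sInf {v : ℝ | ∃ (wb : Fin d → ℝ) (ρ : ℝ) (ξ : Fin n → ℝ),
        (∀ i, y i * (wb ⬝ᵥ X i) ≥ ρ - ξ i) ∧
        v = (1/2) * ∑ k, wb k ^ 2 - ρ + (C/2) * ∑ i, ξ i ^ 2} =
      -(1/2) * sInf {v : ℝ | ∃ α : Fin n → ℝ, (∀ i, 0 ≤ α i) ∧ (∑ i, α i = 1) ∧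
        v = α ⬝ᵥ ((Zᵀ * Z + (1/C) • (1 : Matrix (Fin n) (Fin n) ℝ)).mulVec α)} ∧
    sInf {v : ℝ | ∃ α : Fin n → ℝ, (∀ i, 0 ≤ α i) ∧ (∑ i, α i = 1) ∧
        v = α ⬝ᵥ ((Zᵀ * Z + (1/C) • (1 : Matrix (Fin n) (Fin n) ℝ)).mulVec α)} =
      sInf {v : ℝ | ∃ α : Fin n → ℝ, (∀ i, 0 ≤ α i) ∧ (∑ i, α i = 1) ∧
        v = ∑ k, (A.mulVec α k) ^ 2} := by
  intro Z A
  have : Nonempty (Fin n) := ⟨⟨0, hn⟩⟩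
  obtain ⟨m, hprimal, hdual, hnorm⟩ := soft_margin_strong_duality_general hC Z
  have hmargin (w : Fin d → ℝ) (i : Fin n) : (w ᵥ* Z) i = y i * (w ⬝ᵥ X i) :=
    dotProduct_smul (y i) w (X i)
  simp only [softMarginPrimalValues, hmargin] at hprimal
  simp only [stdSimplex, Set.mem_ofPred_eq, and_assoc] at hdual hnorm
  exact ⟨by rw [hprimal.csInf_eq, hdual.csInf_eq], hdual.csInf_eq.trans hnorm.csInf_eq.symm⟩
end

section
/- (Separation Lemma, part i) The image of the filled simplex lies in the interior of the cone of angle arccos(σ/D) around w: for every x ∈ ℝⁿ with x ≥ 0 entrywise, Σ_i x_i ≤ 1, and x ≠ 0, it holds that ⟨Ax, w⟩ > (σ/D)·‖Ax‖₂·‖w‖₂ (in particular ⟨Ax, w⟩ > 0). -/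
/-!
The open cone `{v | c * ‖v‖ * ‖w‖ < ⟪v, w⟫}` is convex when `0 ≤ c`, because `v ↦ ‖v‖` is
sublinear and `v ↦ ⟪v, w⟫` is linear. For `c = σ / D` it contains every column `a` of the matrix:
`(σ / D) * ‖a‖ * ‖w‖ < σ * ‖w‖ ≤ ⟪a, w⟫`. Hence it contains every nonzero nonnegative combination
of the columns.
-/

open Matrix BigOperators

section ConvexCone

variable {R M ι : Type*} [Semiring R] [PartialOrder R] [AddCommMonoid M] [Module R M]

theorem sum_smul_mem_of_nonneg_of_exists_ne_zero (C : ConvexCone R M) {s : Finset ι} {x : ι → R}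
    {a : ι → M} (hx0 : ∀ i ∈ s, 0 ≤ x i) (hx : ∃ i ∈ s, x i ≠ 0) (ha : ∀ i ∈ s, a i ∈ C) :
    ∑ i ∈ s, x i • a i ∈ C := by
  classical
  -- A convex cone need not contain `0`, so the terms with zero weight have to be dropped.
  have sum_support : ∑ i ∈ s with x i ≠ 0, x i • a i = ∑ i ∈ s, x i • a i :=
    Finset.sum_filter_of_ne fun i _ hi h => hi (by rw [h, zero_smul])
  rw [← sum_support]
  refine Finset.sum_induction_nonempty _ (· ∈ C) (fun _ _ hu hv => C.add_mem hu hv)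
    (Finset.filter_nonempty_iff.mpr hx) fun i hi => ?_
  obtain ⟨his, hxi⟩ := Finset.mem_filter.mp hi
  exact C.smul_mem ((hx0 i his).lt_of_ne' hxi) (ha i his)

end ConvexCone

section InnerProductSpace

open scoped RealInnerProductSpace

variable {E ι : Type*} [NormedAddCommGroup E] [InnerProductSpace ℝ E]

/-- The open circular cone around the axis `w` whose half-angle has cosine `c`. It never contains
the origin, and it is empty if `1 ≤ c` or `w = 0`. -/
def openCircularCone (c : ℝ) (hc : 0 ≤ c) (w : E) : ConvexCone ℝ E where
  carrier := {v | c * ‖v‖ * ‖w‖ < ⟪v, w⟫}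
  smul_mem' r hr v (hv : c * ‖v‖ * ‖w‖ < ⟪v, w⟫) := by
    calc c * ‖r • v‖ * ‖w‖ = r * (c * ‖v‖ * ‖w‖) := by rw [norm_smul_of_nonneg hr.le]; ring
      _ < r * ⟪v, w⟫ := by gcongr
      _ = ⟪r • v, w⟫ := (real_inner_smul_left v w r).symm
  add_mem' u (hu : c * ‖u‖ * ‖w‖ < ⟪u, w⟫) v (hv : c * ‖v‖ * ‖w‖ < ⟪v, w⟫) := by
    calc c * ‖u + v‖ * ‖w‖ ≤ c * (‖u‖ + ‖v‖) * ‖w‖ := by gcongr; exact norm_add_le u v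
      _ = c * ‖u‖ * ‖w‖ + c * ‖v‖ * ‖w‖ := by ring
      _ < ⟪u, w⟫ + ⟪v, w⟫ := add_lt_add hu hv
      _ = ⟪u + v, w⟫ := (inner_add_left u v w).symm

theorem mem_openCircularCone {c : ℝ} {hc : 0 ≤ c} {v w : E} :
    v ∈ openCircularCone c hc w ↔ c * ‖v‖ * ‖w‖ < ⟪v, w⟫ :=
  Iff.rfl

theorem inner_pos_of_mem_openCircularCone {c : ℝ} {hc : 0 ≤ c} {v w : E}
    (hv : v ∈ openCircularCone c hc w) : 0 < ⟪v, w⟫ :=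
  (by positivity : 0 ≤ c * ‖v‖ * ‖w‖).trans_lt (mem_openCircularCone.mp hv)

/-- `w` is `σ`-weakly-separating for the family `a`: every `a i` has component at least `σ` in the
direction of `w`. The family `a` plays the role of the columns of the matrix. -/
structure IsWeaklySeparating (σ : ℝ) (a : ι → E) (w : E) : Prop where
  ne_zero : w ≠ 0
  le_inner_div_norm : ∀ i, σ ≤ ⟪a i, w⟫ / ‖w‖

namespace IsWeaklySeparating

variable {σ D : ℝ} {a : ι → E} {w : E}

theorem mul_norm_le_inner (h : IsWeaklySeparating σ a w) (i : ι) : σ * ‖w‖ ≤ ⟪a i, w⟫ :=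
  (le_div_iff₀ (norm_pos_iff.mpr h.ne_zero)).mp (h.le_inner_div_norm i)

theorem mem_openCircularCone (h : IsWeaklySeparating σ a w) (hσ : 0 < σ) (hc : 0 ≤ σ / D) {i : ι}
    (hi : ‖a i‖ < D) : a i ∈ openCircularCone (σ / D) hc w := by
  have hD : 0 < D := (norm_nonneg (a i)).trans_lt hi
  have hw : 0 < ‖w‖ := norm_pos_iff.mpr h.ne_zero
  calc σ / D * ‖a i‖ * ‖w‖ < σ / D * D * ‖w‖ := by gcongr
    _ = σ * ‖w‖ := by rw [div_mul_cancel₀ σ hD.ne']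
    _ ≤ ⟪a i, w⟫ := h.mul_norm_le_inner i

end IsWeaklySeparating

theorem separation_cone_i_general [Fintype ι] {σ D : ℝ} (hσ : 0 < σ) {a : ι → E} {w : E}
    (hsep : IsWeaklySeparating σ a w) (haD : ∀ i, ‖a i‖ < D)
    {x : ι → ℝ} (hx0 : ∀ i, 0 ≤ x i) (hx : x ≠ 0) :
    σ / D * ‖∑ i, x i • a i‖ * ‖w‖ < ⟪∑ i, x i • a i, w⟫ ∧ 0 < ⟪∑ i, x i • a i, w⟫ := by
  obtain ⟨j, hj⟩ := Function.ne_iff.mp hx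
  have hD : 0 < D := (norm_nonneg (a j)).trans_lt (haD j)
  have hmem : ∑ i, x i • a i ∈ openCircularCone (σ / D) (div_pos hσ hD).le w :=
    sum_smul_mem_of_nonneg_of_exists_ne_zero _ (fun i _ => hx0 i) ⟨j, Finset.mem_univ j, hj⟩
      fun i _ => hsep.mem_openCircularCone hσ _ (haD i)
  exact ⟨mem_openCircularCone.mp hmem, inner_pos_of_mem_openCircularCone hmem⟩

end InnerProductSpace

section EuclideanSpace

open scoped RealInnerProductSpace

variable {ι κ : Type*}

theorem l2_eq_norm_toLp [Fintype ι] (v : ι → ℝ) : l2 v = ‖WithLp.toLp 2 v‖ := by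
  simp only [l2, EuclideanSpace.norm_eq, Real.norm_eq_abs, sq_abs]

theorem dotProduct_eq_inner_toLp [Fintype ι] (v w : ι → ℝ) :
    v ⬝ᵥ w = ⟪WithLp.toLp 2 v, WithLp.toLp 2 w⟫ := by
  rw [EuclideanSpace.inner_toLp_toLp, star_trivial, dotProduct_comm]

theorem toLp_mulVec_eq_sum [Fintype κ] (A : Matrix ι κ ℝ) (x : κ → ℝ) :
    WithLp.toLp 2 (A *ᵥ x) = ∑ j, x j • WithLp.toLp 2 (Aᵀ j) := by
  simp only [mulVec_eq_sum, op_smul_eq_smul, WithLp.toLp_sum, WithLp.toLp_smul]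

end EuclideanSpace

/-- Separation Lemma, part i: if `w` is σ-weakly-separating for `A` (σ > 0) and
`‖Aᵢ‖₂ < D` for all columns, then the image of the filled simplex (minus the origin) lies
in the interior of the cone of angle `arccos(σ/D)` around `w`:
`⟨Ax, w⟩ > (σ/D)·‖Ax‖₂·‖w‖₂ > 0`. -/
theorem separation_cone_i {d n : ℕ} (hn : 0 < n) (A : Matrix (Fin d) (Fin n) ℝ)
    (σ D : ℝ) (hσ : 0 < σ) (hD : 0 < D)
    (w : Fin d → ℝ) (hw : w ≠ 0)
    (hsep : ∀ i, (Aᵀ i) ⬝ᵥ w / l2 w ≥ σ)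
    (hAD : ∀ i, l2 (Aᵀ i) < D)
    (x : Fin n → ℝ) (hx0 : ∀ i, 0 ≤ x i) (hx1 : ∑ i, x i ≤ 1) (hx : x ≠ 0) :
    (A.mulVec x) ⬝ᵥ w > (σ / D) * l2 (A.mulVec x) * l2 w ∧
    (A.mulVec x) ⬝ᵥ w > 0 := by
  simp only [l2_eq_norm_toLp, dotProduct_eq_inner_toLp, toLp_mulVec_eq_sum] at hsep hAD ⊢
  exact separation_cone_i_general hσ ⟨(WithLp.toLp_eq_zero 2).not.mpr hw, hsep⟩ hAD hx0 hx
end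

section
/- (Separation Lemma, part ii) Any vector in the cone of angle arcsin(σ/D) around w is still weakly-separating for A: if v ∈ ℝ^d is nonzero and ⟨v, w⟩ ≥ √(1 − (σ/D)²)·‖v‖₂·‖w‖₂, then there exists σ' > 0 such that ⟨A_i, v⟩/‖v‖₂ ≥ σ' for all i ∈ [1..n]; equivalently, ⟨A_i, v⟩ > 0 for every i. -/
open Matrix BigOperators

/-!
In terms of angles: `⟨Aᵢ, w⟩ / ‖w‖ ≥ σ` and `‖Aᵢ‖ < D` imply that `w` makes an angle smaller than
`arccos (σ / D)` with `Aᵢ`, while `v` makes an angle of at most `arcsin (σ / D)` with `w`. These two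
bounds add up to `π / 2`, so by the triangle inequality for angles the angle between `Aᵢ` and `v` is
acute. The margins of finitely many vectors have a positive minimum.
-/

section InnerProductSpace

open InnerProductGeometry

variable {E : Type*} [NormedAddCommGroup E] [InnerProductSpace ℝ E]

theorem inner_pos_of_angle_lt_pi_div_two {x y : E} (h : angle x y < Real.pi / 2) :
    0 < inner ℝ x y := by
  have hcos : 0 < inner ℝ x y / (‖x‖ * ‖y‖) := Real.arccos_lt_pi_div_two.1 h
  contrapose! hcos
  exact div_nonpos_of_nonpos_of_nonneg hcos (by positivity)

theorem angle_le_arccos {x y : E} {c : ℝ} (hx : x ≠ 0) (hy : y ≠ 0)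
    (h : c * ‖x‖ * ‖y‖ ≤ inner ℝ x y) : angle x y ≤ Real.arccos c := by
  refine Real.arccos_le_arccos ?_
  rwa [le_div_iff₀ (by positivity), ← mul_assoc]

theorem angle_lt_arccos {x y : E} {c : ℝ} (hc : -1 ≤ c)
    (h : c * ‖x‖ * ‖y‖ < inner ℝ x y) : angle x y < Real.arccos c := by
  have hx : x ≠ 0 := by rintro rfl; simp at h
  have hy : y ≠ 0 := by rintro rfl; simp at h
  refine Real.arccos_lt_arccos hc ?_ (abs_le.1 (abs_real_inner_div_norm_mul_norm_le_one x y)).2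
  rwa [lt_div_iff₀ (by positivity), ← mul_assoc]

theorem inner_pos_of_lt_inner_of_sqrt_le_inner {x y z : E} {s : ℝ} (hs : 0 ≤ s)
    (hy : y ≠ 0) (hz : z ≠ 0) (hxy : s * ‖x‖ * ‖y‖ < inner ℝ x y)
    (hzy : √(1 - s ^ 2) * ‖z‖ * ‖y‖ ≤ inner ℝ z y) : 0 < inner ℝ x z := by
  have hyz : angle y z ≤ Real.arcsin s := by
    rw [angle_comm, Real.arcsin_eq_arccos hs]
    exact angle_le_arccos hz hy hzy
  refine inner_pos_of_angle_lt_pi_div_two ?_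
  calc
    angle x z ≤ angle x y + angle y z := angle_le_angle_add_angle x y z
    _ < Real.arccos s + Real.arcsin s :=
      add_lt_add_of_lt_of_le (angle_lt_arccos (by linarith) hxy) hyz
    _ = Real.pi / 2 := by rw [Real.arccos_eq_pi_div_two_sub_arcsin, sub_add_cancel]

variable {ι : Type*}

/-- The vector `w` is `σ`-weakly-separating for the family `a`: it is nonzero and every `a i` has
component at least `σ` in the direction of `w`. For a matrix, `a` is the family of its columns. -/
def IsWeaklySeparating_s8 (σ : ℝ) (a : ι → E) (w : E) : Prop :=
  w ≠ 0 ∧ ∀ i, σ ≤ inner ℝ (a i) w / ‖w‖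

theorem exists_isWeaklySeparating_iff_forall_inner_pos [Finite ι] {a : ι → E} {v : E}
    (hv : v ≠ 0) : (∃ σ > 0, IsWeaklySeparating_s8 σ a v) ↔ ∀ i, 0 < inner ℝ (a i) v := by
  have hv_norm : 0 < ‖v‖ := norm_pos_iff.2 hv
  constructor
  · rintro ⟨σ, hσ, -, hsep⟩ i
    exact (div_pos_iff_of_pos_right hv_norm).1 (hσ.trans_le (hsep i))
  · intro hpos
    rcases isEmpty_or_nonempty ι with _ | _
    · exact ⟨1, one_pos, hv, isEmptyElim⟩
    · obtain ⟨i, hi⟩ := Finite.exists_min fun i => inner ℝ (a i) v / ‖v‖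
      exact ⟨_, div_pos (hpos i) hv_norm, hv, hi⟩

theorem IsWeaklySeparating_s8.div_mul_norm_mul_norm_lt_inner {a : ι → E} {w : E} {σ D : ℝ}
    (hw : IsWeaklySeparating_s8 σ a w) (hσ : 0 < σ) {i : ι} (haD : ‖a i‖ < D) :
    σ / D * ‖a i‖ * ‖w‖ < inner ℝ (a i) w := by
  have hw_norm : 0 < ‖w‖ := norm_pos_iff.2 hw.1
  have hD : 0 < D := (norm_nonneg _).trans_lt haD
  calc
    σ / D * ‖a i‖ * ‖w‖ < σ / D * D * ‖w‖ := by gcongr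
    _ = σ * ‖w‖ := by rw [div_mul_cancel₀ σ hD.ne']
    _ ≤ inner ℝ (a i) w := (le_div_iff₀ hw_norm).1 (hw.2 i)

theorem separation_cone_ii_general [Finite ι] {a : ι → E} {w v : E} {σ D : ℝ} (hσ : 0 < σ)
    (hw : IsWeaklySeparating_s8 σ a w) (haD : ∀ i, ‖a i‖ < D) (hv : v ≠ 0)
    (hvw : √(1 - (σ / D) ^ 2) * ‖v‖ * ‖w‖ ≤ inner ℝ v w) :
    (∃ σ' > 0, IsWeaklySeparating_s8 σ' a v) ∧ ∀ i, 0 < inner ℝ (a i) v := by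
  have hpos : ∀ i, 0 < inner ℝ (a i) v := fun i =>
    have hD : 0 < D := (norm_nonneg _).trans_lt (haD i)
    inner_pos_of_lt_inner_of_sqrt_le_inner (by positivity) hw.1 hv
      (hw.div_mul_norm_mul_norm_lt_inner hσ (haD i)) hvw
  exact ⟨(exists_isWeaklySeparating_iff_forall_inner_pos hv).2 hpos, hpos⟩

end InnerProductSpace

section EuclideanSpace

variable {κ : Type*} [Fintype κ]

theorem norm_toLp_eq_l2 (x : κ → ℝ) : ‖WithLp.toLp 2 x‖ = l2 x := by
  simp only [EuclideanSpace.norm_eq, Real.norm_eq_abs, sq_abs, l2]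

theorem inner_toLp_eq_dotProduct (x y : κ → ℝ) :
    inner ℝ (WithLp.toLp 2 x) (WithLp.toLp 2 y) = x ⬝ᵥ y := by
  rw [EuclideanSpace.inner_toLp_toLp, star_trivial, dotProduct_comm]

theorem isWeaklySeparating_toLp_transpose_iff {ι : Type*} {A : Matrix κ ι ℝ} {σ : ℝ} {w : κ → ℝ}
    (hw : w ≠ 0) :
    IsWeaklySeparating_s8 σ (fun i => WithLp.toLp 2 (Aᵀ i)) (WithLp.toLp 2 w) ↔
      ∀ i, Aᵀ i ⬝ᵥ w / l2 w ≥ σ := by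
  simp only [IsWeaklySeparating_s8, ne_eq, WithLp.toLp_eq_zero, hw, not_false_eq_true, true_and,
    inner_toLp_eq_dotProduct, norm_toLp_eq_l2, ge_iff_le]

end EuclideanSpace

/-- Separation Lemma, part ii: if `w` is σ-weakly-separating for `A` (σ > 0, `‖Aᵢ‖₂ < D`),
then any nonzero vector `v` in the cone of angle `arcsin(σ/D)` around `w`, i.e. with
`⟨v, w⟩ ≥ √(1 − (σ/D)²)·‖v‖₂·‖w‖₂`, is still σ'-weakly-separating for `A` for some
`σ' > 0`; equivalently `⟨Aᵢ, v⟩ > 0` for every `i`. -/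
theorem separation_cone_ii {d n : ℕ} (hn : 0 < n) (A : Matrix (Fin d) (Fin n) ℝ)
    (σ D : ℝ) (hσ : 0 < σ) (hD : 0 < D)
    (w : Fin d → ℝ) (hw : w ≠ 0)
    (hsep : ∀ i, (Aᵀ i) ⬝ᵥ w / l2 w ≥ σ)
    (hAD : ∀ i, l2 (Aᵀ i) < D)
    (v : Fin d → ℝ) (hv : v ≠ 0)
    (hvw : v ⬝ᵥ w ≥ Real.sqrt (1 - (σ / D) ^ 2) * l2 v * l2 w) :
    (∃ σ' > 0, ∀ i, (Aᵀ i) ⬝ᵥ v / l2 v ≥ σ') ∧ (∀ i, (Aᵀ i) ⬝ᵥ v > 0) := by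
  simpa only [isWeaklySeparating_toLp_transpose_iff hv, inner_toLp_eq_dotProduct] using
    separation_cone_ii_general hσ ((isWeaklySeparating_toLp_transpose_iff hw).2 hsep)
      (by simpa only [norm_toLp_eq_l2] using hAD) ((WithLp.toLp_eq_zero 2).not.2 hv)
      (by simpa only [norm_toLp_eq_l2, inner_toLp_eq_dotProduct] using hvw)
end

section
/- For every δ in the filled simplex ▲ with δ ≠ 0, the vector v := −Ãδ is nonzero and lies in the cone of angle arcsin(σ/D) around w, i.e. ⟨v, w⟩ > √(1 − (σ/D)²)·‖v‖₂·‖w‖₂. (Equivalently: the point −Ãδ/(Σ_i δ_i) lies in the open Euclidean ball of radius D around −b̃, and this whole ball is contained in that cone.) -/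
open Matrix BigOperators

/-!
Up to the factor `∑ i, δ i > 0`, the vector `-Ãδ` is a convex combination of the points
`-A_i - b̃`, so it lies in the open ball of radius `D` around `p = -b̃`. A ball of radius `ρ ≤ ‖p‖`
around `p` lies in the cone of half-angle `arcsin (ρ / ‖p‖)` with axis `p`: for `x` in the ball and
`t = √(‖p‖² - ρ²)`, we have `2⟪x, p⟫ = ‖x‖² + ‖p‖² - ‖x - p‖² > ‖x‖² + t² ≥ 2t‖x‖`. Here
`‖p‖ = D² / σ`, so that `ρ / ‖p‖ = σ / D`, and `p` is a positive multiple of `w`.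
-/

section Cone

variable {E : Type*} [NormedAddCommGroup E] [InnerProductSpace ℝ E]

/-- The open circular cone with axis `w`: the nonzero vectors whose angle with `w` has cosine
greater than `κ`. Clearing denominators in the cosine excludes the origin automatically. -/
def openCone (w : E) (κ : ℝ) : Set E := {v | κ * ‖v‖ * ‖w‖ < inner ℝ v w}

lemma mem_openCone {v w : E} {κ : ℝ} : v ∈ openCone w κ ↔ κ * ‖v‖ * ‖w‖ < inner ℝ v w := Iff.rfl

lemma ne_zero_of_mem_openCone {v w : E} {κ : ℝ} (hv : v ∈ openCone w κ) : v ≠ 0 := by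
  rintro rfl
  simp [mem_openCone] at hv

lemma smul_mem_openCone {v w : E} {κ c : ℝ} (hc : 0 < c) (hv : v ∈ openCone w κ) :
    c • v ∈ openCone w κ := by
  calc κ * ‖c • v‖ * ‖w‖ = c * (κ * ‖v‖ * ‖w‖) := by rw [norm_smul_of_nonneg hc.le]; ring
    _ < c * inner ℝ v w := mul_lt_mul_of_pos_left hv hc
    _ = inner ℝ (c • v) w := (real_inner_smul_left v w c).symm

lemma mem_openCone_comm {v w : E} {κ : ℝ} : v ∈ openCone w κ ↔ w ∈ openCone v κ := by
  simp only [mem_openCone, real_inner_comm, mul_right_comm]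

lemma openCone_smul {c : ℝ} (hc : 0 < c) (w : E) (κ : ℝ) :
    openCone (c • w) κ = openCone w κ := by
  ext v
  rw [mem_openCone_comm, mem_openCone_comm (w := w)]
  refine ⟨fun h ↦ ?_, smul_mem_openCone hc⟩
  simpa only [inv_smul_smul₀ hc.ne'] using smul_mem_openCone (inv_pos.mpr hc) h

lemma ball_subset_openCone {p : E} {ρ : ℝ} (hρ : ρ ≤ ‖p‖) :
    Metric.ball p ρ ⊆ openCone p √(1 - (ρ / ‖p‖) ^ 2) := by
  intro x hx
  have hρ0 : 0 < ρ := Metric.pos_of_mem_ball hx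
  have hp : 0 < ‖p‖ := hρ0.trans_le hρ
  have hdist : ‖x - p‖ ^ 2 < ρ ^ 2 := by
    gcongr
    exact mem_ball_iff_norm.mp hx
  -- `t` is the length of a tangent from the origin to the ball.
  set t : ℝ := √(1 - (ρ / ‖p‖) ^ 2) * ‖p‖ with ht
  have ht_sq : t ^ 2 = ‖p‖ ^ 2 - ρ ^ 2 := by
    have : 0 ≤ 1 - (ρ / ‖p‖) ^ 2 :=
      sub_nonneg.mpr (pow_le_one₀ (by positivity) ((div_le_one hp).mpr hρ))
    rw [ht, mul_pow, Real.sq_sqrt this]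
    field_simp
  have hlt : t * ‖x‖ < inner ℝ x p := by
    linarith [two_mul_le_add_sq ‖x‖ t, norm_sub_sq_real x p]
  simpa only [mem_openCone, ht, mul_right_comm] using hlt

lemma ball_smul_subset_openCone {w : E} {c ρ : ℝ} (hc : 0 < c) (hρ : ρ ≤ c * ‖w‖) :
    Metric.ball (c • w) ρ ⊆ openCone w √(1 - (ρ / (c * ‖w‖)) ^ 2) := by
  rw [← norm_smul_of_nonneg hc.le] at hρ ⊢
  exact openCone_smul hc w _ ▸ ball_subset_openCone hρ

lemma sum_smul_mem_openCone_of_convex {ι : Type*} {t : Finset ι} {s : Set E} {w : E} {κ : ℝ}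
    {δ : ι → ℝ} {z : ι → E} (hs : Convex ℝ s) (hsub : s ⊆ openCone w κ) (hδ : ∀ i ∈ t, 0 ≤ δ i)
    (hsum : 0 < ∑ i ∈ t, δ i) (hz : ∀ i ∈ t, z i ∈ s) :
    ∑ i ∈ t, δ i • z i ∈ openCone w κ := by
  have hmem : t.centerMass δ z ∈ openCone w κ := hsub (hs.centerMass_mem hδ hsum hz)
  simpa only [Finset.centerMass, smul_inv_smul₀ hsum.ne'] using smul_mem_openCone hsum hmem

theorem neg_image_in_cone_general {ι : Type*} [Fintype ι] {a : ι → E} {w : E} {σ D : ℝ}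
    (hw : w ≠ 0) (hσ : 0 < σ) (hσD : σ ≤ D) (ha : ∀ i, ‖a i‖ < D)
    {δ : ι → ℝ} (hδ0 : ∀ i, 0 ≤ δ i) (hδ : δ ≠ 0) :
    let b : E := -(D ^ 2 / σ) • (‖w‖⁻¹ • w)
    let v : E := -∑ i, δ i • (a i + b)
    v ≠ 0 ∧ inner ℝ v w > √(1 - (σ / D) ^ 2) * ‖v‖ * ‖w‖ := by
  intro b v
  have hD : 0 < D := hσ.trans_le hσD
  have hw' : 0 < ‖w‖ := norm_pos_iff.mpr hw
  set c : ℝ := D ^ 2 / σ * ‖w‖⁻¹ with hc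
  have hc_pos : 0 < c := by positivity
  have hb : -b = c • w := by simp only [b, hc, neg_smul, neg_neg, smul_smul, neg_mul]
  have hcw : c * ‖w‖ = D ^ 2 / σ := inv_mul_cancel_right₀ hw'.ne' _
  have hD_le : D ≤ c * ‖w‖ := by
    rw [hcw, le_div_iff₀ hσ, sq]
    gcongr
  have hratio : D / (c * ‖w‖) = σ / D := by
    rw [hcw]
    field_simp
  have hball : Metric.ball (-b) D ⊆ openCone w √(1 - (σ / D) ^ 2) := by
    simpa only [hb, hratio] using ball_smul_subset_openCone hc_pos hD_le
  have hmem : ∀ i, -(a i + b) ∈ Metric.ball (-b) D := fun i ↦ by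
    simpa [mem_ball_iff_norm] using ha i
  have hv : v ∈ openCone w √(1 - (σ / D) ^ 2) := by
    simpa only [v, smul_neg, Finset.sum_neg_distrib] using
      sum_smul_mem_openCone_of_convex (convex_ball _ _) hball (fun i _ ↦ hδ0 i)
        (Fintype.sum_pos (lt_of_le_of_ne hδ0 hδ.symm)) (fun i _ ↦ hmem i)
  exact ⟨ne_zero_of_mem_openCone hv, hv⟩

end Cone

section Coordinates

lemma toLp_mulVec_add_const {m n : Type*} [Fintype n] (A : Matrix m n ℝ) (b : m → ℝ)
    (δ : n → ℝ) :
    WithLp.toLp 2 ((Matrix.of fun k i ↦ A k i + b k) *ᵥ δ) =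
      ∑ i, δ i • (WithLp.toLp 2 (Aᵀ i) + WithLp.toLp 2 b) := by
  ext k
  simp [mulVec, dotProduct, add_mul, mul_comm (δ _)]

variable {ι : Type*} [Fintype ι]

lemma l2_eq_norm (v : ι → ℝ) : l2 v = ‖WithLp.toLp 2 v‖ := by
  simp only [l2, EuclideanSpace.norm_eq, Real.norm_eq_abs, sq_abs]

lemma dotProduct_eq_inner (v w : ι → ℝ) :
    v ⬝ᵥ w = inner ℝ (WithLp.toLp 2 v) (WithLp.toLp 2 w) := by
  rw [EuclideanSpace.inner_toLp_toLp, star_trivial, dotProduct_comm]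

lemma dotProduct_div_l2_le_l2 (v w : ι → ℝ) : v ⬝ᵥ w / l2 w ≤ l2 v := by
  rw [dotProduct_eq_inner, l2_eq_norm, l2_eq_norm]
  exact div_le_of_le_mul₀ (norm_nonneg _) (norm_nonneg _) (real_inner_le_norm _ _)

lemma toLp_mul_div_l2 (c : ℝ) (w : ι → ℝ) :
    WithLp.toLp 2 (fun k ↦ c * (w k / l2 w)) =
      c • (‖WithLp.toLp 2 w‖⁻¹ • WithLp.toLp 2 w) := by
  ext k
  simp [l2_eq_norm, div_eq_inv_mul]

end Coordinates

/-- For every nonzero `δ` in the filled simplex, the vector `v = −Ãδ` is nonzero and lies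
(strictly) in the cone of angle `arcsin(σ/D)` around `w`:
`⟨v, w⟩ > √(1 − (σ/D)²)·‖v‖₂·‖w‖₂`. Here `b̃ = −(D²/σ)·w/‖w‖₂` and `Ã = A + b̃·1ᵀ`. -/
theorem neg_image_in_cone {d n : ℕ} (hn : 0 < n) (A : Matrix (Fin d) (Fin n) ℝ)
    (σ D : ℝ) (hσ : 0 < σ) (hD : 0 < D)
    (w : Fin d → ℝ) (hw : w ≠ 0)
    (hsep : ∀ i, (Aᵀ i) ⬝ᵥ w / l2 w ≥ σ)
    (hAD : ∀ i, l2 (Aᵀ i) < D)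
    (δ : Fin n → ℝ) (hδ0 : ∀ i, 0 ≤ δ i) (hδ1 : ∑ i, δ i ≤ 1) (hδ : δ ≠ 0) :
    let bt : Fin d → ℝ := fun k => -(D ^ 2 / σ) * (w k / l2 w)
    let Atil : Matrix (Fin d) (Fin n) ℝ := Matrix.of fun k i => A k i + bt k
    let v : Fin d → ℝ := -(Atil.mulVec δ)
    v ≠ 0 ∧ v ⬝ᵥ w > Real.sqrt (1 - (σ / D) ^ 2) * l2 v * l2 w := by
  intro bt Atil v
  have hσD : σ ≤ D :=
    ((hsep ⟨0, hn⟩).le.trans (dotProduct_div_l2_le_l2 _ _)).trans (hAD _).le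
  have hv : WithLp.toLp 2 v = -∑ i, δ i • (WithLp.toLp 2 (Aᵀ i) +
      -(D ^ 2 / σ) • (‖WithLp.toLp 2 w‖⁻¹ • WithLp.toLp 2 w)) := by
    rw [WithLp.toLp_neg, toLp_mulVec_add_const, toLp_mul_div_l2]
  rw [← (WithLp.toLp_eq_zero 2).ne, dotProduct_eq_inner, l2_eq_norm, l2_eq_norm, hv]
  exact neg_image_in_cone_general ((WithLp.toLp_eq_zero 2).not.mpr hw) hσ hσD
    (fun i ↦ l2_eq_norm (Aᵀ i) ▸ hAD i) hδ0 hδ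
end

section
/- (Key technical lemma) For every pair of vectors x, δ in the filled simplex ▲ with δ ≠ 0, it holds that ⟨Ãx − b̃, −Ãδ⟩ > 0. -/
open Matrix BigOperators

/-!
Write `aᵢ` for the columns of `A` and `b` for the shift `b̃`. The shift is long enough that
`⟨aᵢ, b⟩ ≤ -D²`, while `⟨aᵢ, aⱼ⟩ < D²`, so `⟨aᵢ, aⱼ + b⟩ < 0` for all `i, j`. This alone yields
`⟨b, aⱼ + b⟩ = ‖aⱼ + b‖² - ⟨aⱼ, aⱼ + b⟩ > 0`. Now `Ãx - b` is a convex combination of `-b` and the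
`aᵢ`, and `-Ãδ` is a nonzero conic combination of the `-(aⱼ + b)`, so their inner product is a
nonnegative combination of positive numbers, not all of whose coefficients vanish.
-/

section OrderedModule

variable {R E ι : Type*} [Fintype ι]

theorem sum_smul_sub_add_mem_of_convex [Field R] [LinearOrder R] [IsStrictOrderedRing R]
    [AddCommGroup E] [Module R E] {s : Set E} (hs : Convex R s) {a : ι → E} {p : E}
    (ha : ∀ i, a i ∈ s) (hp : p ∈ s) {x : ι → R} (hx0 : ∀ i, 0 ≤ x i) (hx1 : ∑ i, x i ≤ 1) :
    ∑ i, x i • (a i - p) + p ∈ s := by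
  have hcomb : ∑ i, x i • (a i - p) + p = (1 - ∑ i, x i) • p + ∑ i, x i • a i := by
    simp only [smul_sub, Finset.sum_sub_distrib, sub_smul, one_smul, Finset.sum_smul]
    abel
  rw [hcomb]
  -- Give `p` the missing weight `1 - ∑ i, x i`, indexing it by `none : Option ι`.
  simpa [Fintype.sum_option] using
    hs.sum_mem (t := Finset.univ) (w := fun o : Option ι => o.elim (1 - ∑ i, x i) x)
      (z := fun o => o.elim p a) (by simp [Option.forall, hx0, hx1])
      (by simp [Fintype.sum_option]) (by simp [Option.forall, hp, ha])

theorem map_sum_smul_pos {M : Type*} [Semiring R] [PartialOrder R] [AddCommMonoid E] [Module R E]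
    [AddCommMonoid M] [PartialOrder M] [IsOrderedCancelAddMonoid M] [Module R M]
    [PosSMulStrictMono R M] (f : E →ₗ[R] M) {v : ι → E} (hv : ∀ i, 0 < f (v i)) {δ : ι → R}
    (hδ0 : ∀ i, 0 ≤ δ i) (hδ : δ ≠ 0) : 0 < f (∑ i, δ i • v i) := by
  obtain ⟨j, hj⟩ := Function.ne_iff.mp hδ
  simp only [map_sum, map_smul]
  exact Finset.sum_pos' (fun i _ => smul_nonneg (hδ0 i) (hv i).le)
    ⟨j, Finset.mem_univ j, smul_pos ((hδ0 j).lt_of_ne' hj) (hv j)⟩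

theorem bilin_add_pos_of_bilin_add_neg [CommRing R] [PartialOrder R] [IsOrderedAddMonoid R]
    [AddCommMonoid E] [Module R E] {B : LinearMap.BilinForm R E} (hB : B.IsNonneg) {a b : E}
    (hab : B a (a + b) < 0) : 0 < B b (a + b) := by
  have hsplit : B (a + b) (a + b) = B a (a + b) + B b (a + b) := by
    rw [map_add B, LinearMap.add_apply]
  exact pos_of_lt_add_right ((hab.trans_le (hB.nonneg (a + b))).trans_eq hsplit)

theorem key_inner_positive_general [Field R] [LinearOrder R] [IsStrictOrderedRing R]
    [AddCommGroup E] [Module R E] {B : LinearMap.BilinForm R E} (hB : B.IsNonneg)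
    {a : ι → E} {b : E} (hab : ∀ i j, B (a i) (a j + b) < 0) {x δ : ι → R}
    (hx0 : ∀ i, 0 ≤ x i) (hx1 : ∑ i, x i ≤ 1) (hδ0 : ∀ i, 0 ≤ δ i) (hδ : δ ≠ 0) :
    0 < B (∑ i, x i • (a i + b) - b) (-∑ i, δ i • (a i + b)) := by
  have hcol (j : ι) : 0 < B (∑ i, x i • (a i + b) - b) (-(a j + b)) := by
    have hconv : Convex R {p | 0 < B p (-(a j + b))} :=
      convex_halfSpace_gt (B.flip (-(a j + b))).isLinear 0
    have ha (i : ι) : 0 < B (a i) (-(a j + b)) := by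
      rw [map_neg]
      exact neg_pos.mpr (hab i j)
    have hb : 0 < B (-b) (-(a j + b)) := by
      rw [map_neg B, LinearMap.neg_apply, map_neg, neg_neg]
      exact bilin_add_pos_of_bilin_add_neg hB (hab j j)
    simpa only [sub_neg_eq_add, ← sub_eq_add_neg, Set.mem_ofPred_eq] using
      sum_smul_sub_add_mem_of_convex hconv ha hb hx0 hx1
  simpa only [smul_neg, Finset.sum_neg_distrib] using
    map_sum_smul_pos (B (∑ i, x i • (a i + b) - b)) hcol hδ0 hδ

end OrderedModule

section DotProduct

variable {R m n : Type*} [Fintype n]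

theorem of_add_mulVec_eq_sum [CommSemiring R] (A : Matrix m n R) (b : m → R) (x : n → R) :
    (Matrix.of fun k i => A k i + b k) *ᵥ x = ∑ i, x i • (Aᵀ i + b) := by
  simp only [mulVec_eq_sum, op_smul_eq_smul]
  rfl

theorem isNonneg_dotProductBilin [CommRing R] [LinearOrder R] [IsStrictOrderedRing R] :
    LinearMap.BilinForm.IsNonneg (dotProductBilin R R : LinearMap.BilinForm R (n → R)) where
  nonneg v := Finset.sum_nonneg fun i _ => mul_self_nonneg (v i)

theorem dotProduct_neg_sq_div_mul_le [Field R] [LinearOrder R] [IsStrictOrderedRing R]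
    {D σ r : R} (hσ : 0 < σ) {v w : n → R} (hvw : σ ≤ v ⬝ᵥ w / r) :
    v ⬝ᵥ (fun k => -(D ^ 2 / σ) * (w k / r)) ≤ -D ^ 2 :=
  calc
    v ⬝ᵥ (fun k => -(D ^ 2 / σ) * (w k / r)) = -(D ^ 2 / σ * (v ⬝ᵥ w / r)) := by
      simp only [dotProduct, Finset.sum_div, Finset.mul_sum, ← Finset.sum_neg_distrib]
      exact Finset.sum_congr rfl fun k _ => by ring
    _ ≤ -(D ^ 2 / σ * σ) := by gcongr
    _ = -D ^ 2 := by rw [div_mul_cancel₀ _ hσ.ne']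

theorem dotProduct_lt_sq_of_l2_lt {D : ℝ} {v w : n → ℝ} (hv : l2 v < D) (hw : l2 w < D) :
    v ⬝ᵥ w < D ^ 2 :=
  calc
    v ⬝ᵥ w ≤ l2 v * l2 w := Real.sum_mul_le_sqrt_mul_sqrt Finset.univ v w
    _ < D * D := mul_lt_mul'' hv hw (Real.sqrt_nonneg _) (Real.sqrt_nonneg _)
    _ = D ^ 2 := (sq D).symm

theorem dotProduct_add_neg_sq_div_mul_neg {D σ r : ℝ} (hσ : 0 < σ) {v v' w : n → ℝ}
    (hvw : σ ≤ v ⬝ᵥ w / r) (hv : l2 v < D) (hv' : l2 v' < D) :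
    v ⬝ᵥ (v' + fun k => -(D ^ 2 / σ) * (w k / r)) < 0 :=
  calc
    v ⬝ᵥ (v' + fun k => -(D ^ 2 / σ) * (w k / r))
        = v ⬝ᵥ v' + v ⬝ᵥ fun k => -(D ^ 2 / σ) * (w k / r) := dotProduct_add _ _ _
    _ < D ^ 2 + -D ^ 2 :=
      add_lt_add_of_lt_of_le (dotProduct_lt_sq_of_l2_lt hv hv')
        (dotProduct_neg_sq_div_mul_le hσ hvw)
    _ = 0 := add_neg_cancel _

end DotProduct

/-- Key technical lemma: with `b̃ = −(D²/σ)·w/‖w‖₂` and `Ã = A + b̃·1ᵀ`, for every pair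
of vectors `x, δ` in the filled simplex with `δ ≠ 0`, one has `⟨Ãx − b̃, −Ãδ⟩ > 0`. -/
theorem key_inner_positive {d n : ℕ} (hn : 0 < n) (A : Matrix (Fin d) (Fin n) ℝ)
    (σ D : ℝ) (hσ : 0 < σ) (hD : 0 < D)
    (w : Fin d → ℝ) (hw : w ≠ 0)
    (hsep : ∀ i, (Aᵀ i) ⬝ᵥ w / l2 w ≥ σ)
    (hAD : ∀ i, l2 (Aᵀ i) < D)
    (x δ : Fin n → ℝ)
    (hx0 : ∀ i, 0 ≤ x i) (hx1 : ∑ i, x i ≤ 1)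
    (hδ0 : ∀ i, 0 ≤ δ i) (hδ1 : ∑ i, δ i ≤ 1) (hδ : δ ≠ 0) :
    let bt : Fin d → ℝ := fun k => -(D ^ 2 / σ) * (w k / l2 w)
    let Atil : Matrix (Fin d) (Fin n) ℝ := Matrix.of fun k i => A k i + bt k
    (Atil.mulVec x - bt) ⬝ᵥ (-(Atil.mulVec δ)) > 0 := by
  intro bt Atil
  rw [of_add_mulVec_eq_sum A bt x, of_add_mulVec_eq_sum A bt δ]
  exact key_inner_positive_general isNonneg_dotProductBilin (a := Aᵀ) (b := bt)
    (fun i j => dotProduct_add_neg_sq_div_mul_neg hσ (hsep i) (hAD i) (hAD j)) hx0 hx1 hδ0 hδ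
end

section
/- (SVM ⪯ Lasso, equality of optimal values) The constructed Lasso instance has the same optimal value as the original SVM: min over x ∈ ℝⁿ with ‖x‖₁ ≤ 1 of ‖Ãx − b̃‖₂² equals min over x in the unit simplex Δ of ‖Ax‖₂² (both minima are attained since the feasible sets are compact). -/
open Matrix BigOperators

/-!
If every column of `A` makes a non-acute angle with every column of `Ã = A + b 1ᵀ`, then lowering
the entries of a point `y` of the simplex cannot help: for `x ≤ y` we have
`Ã x - b = A y - Ã (y - x)`, and `⟪A y, Ã (y - x)⟫ ≤ 0`, so `‖A y‖ ≤ ‖Ã x - b‖`. Every point of the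
`ℓ¹` ball lies below some point of the simplex, on which the two objectives agree. The translation
by `-(D² / σ) w / ‖w‖` lowers each inner product with a column of `A` by at least `D²`, an upper
bound for `⟪A_i, A_j⟫`.
-/

section OrderedRing

variable {m ι R : Type*} [Fintype ι]

theorem add_replicateCol_mulVec [CommSemiring R] (A : Matrix m ι R) (b : m → R) (x : ι → R) :
    (A + replicateCol ι b) *ᵥ x = A *ᵥ x + (∑ i, x i) • b := by
  rw [← vecMulVec_one, add_mulVec, vecMulVec_mulVec, one_dotProduct, op_smul_eq_smul]

variable [Fintype m]

theorem mulVec_dotProduct_mulVec_nonpos {κ : Type*} [Fintype κ] [CommSemiring R] [PartialOrder R]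
    [IsOrderedRing R] {B : Matrix m ι R} {C : Matrix m κ R} (hBC : ∀ i j, Bᵀ i ⬝ᵥ Cᵀ j ≤ 0)
    {y : ι → R} {z : κ → R} (hy : 0 ≤ y) (hz : 0 ≤ z) : (B *ᵥ y) ⬝ᵥ (C *ᵥ z) ≤ 0 := by
  simp only [mulVec_eq_sum, op_smul_eq_smul, sum_dotProduct, dotProduct_sum, smul_dotProduct,
    dotProduct_smul, smul_eq_mul]
  exact Finset.sum_nonpos fun j _ => mul_nonpos_of_nonneg_of_nonpos (hz j) <|
    Finset.sum_nonpos fun i _ => mul_nonpos_of_nonneg_of_nonpos (hy i) (hBC i j)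

theorem sum_sq_le_sum_sub_sq_of_dotProduct_nonpos [CommRing R] [LinearOrder R]
    [IsStrictOrderedRing R] {u v : m → R} (huv : u ⬝ᵥ v ≤ 0) :
    ∑ k, u k ^ 2 ≤ ∑ k, (u k - v k) ^ 2 := by
  have expand : ∑ k, (u k - v k) ^ 2 = ∑ k, u k ^ 2 - 2 * (u ⬝ᵥ v) + ∑ k, v k ^ 2 := by
    simp only [sub_sq, dotProduct, Finset.sum_add_distrib, Finset.sum_sub_distrib, Finset.mul_sum,
      mul_assoc]
  have hv : 0 ≤ ∑ k, v k ^ 2 := Finset.sum_nonneg fun k _ => sq_nonneg (v k)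
  linarith

theorem exists_mem_stdSimplex_ge [Nonempty ι] [Ring R] [LinearOrder R] [IsOrderedAddMonoid R]
    {x : ι → R} (hx : ∑ i, (x i)⁺ ≤ 1) : ∃ y ∈ stdSimplex R ι, x ≤ y := by
  classical
  obtain ⟨j⟩ := ‹Nonempty ι›
  let slack : ι → R := Pi.single j (1 - ∑ i, (x i)⁺)
  have slack_nonneg : 0 ≤ slack := Pi.single_nonneg.2 (sub_nonneg.2 hx)
  refine ⟨x⁺ + slack, ⟨add_nonneg (posPart_nonneg x) slack_nonneg, ?_⟩,
    (le_posPart x).trans (le_add_of_nonneg_right slack_nonneg)⟩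
  simp [slack, Finset.sum_add_distrib]

theorem sum_sq_mulVec_le_sum_sq_residual [CommRing R] [LinearOrder R] [IsStrictOrderedRing R]
    {A : Matrix m ι R} {b : m → R} (hAb : ∀ i j, Aᵀ i ⬝ᵥ (Aᵀ j + b) ≤ 0) {x y : ι → R}
    (hy : y ∈ stdSimplex R ι) (hxy : x ≤ y) :
    ∑ k, (A *ᵥ y) k ^ 2 ≤ ∑ k, (((A + replicateCol ι b) *ᵥ x) k - b k) ^ 2 := by
  set A' := A + replicateCol ι b
  have residual : A' *ᵥ x - b = A *ᵥ y - A' *ᵥ (y - x) := by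
    have hA'y : A' *ᵥ y = A *ᵥ y + b := by rw [add_replicateCol_mulVec, hy.2, one_smul]
    rw [mulVec_sub, hA'y]
    abel
  have obtuse : (A *ᵥ y) ⬝ᵥ (A' *ᵥ (y - x)) ≤ 0 :=
    mulVec_dotProduct_mulVec_nonpos hAb hy.1 (sub_nonneg.2 hxy)
  calc ∑ k, (A *ᵥ y) k ^ 2 ≤ ∑ k, ((A *ᵥ y) k - (A' *ᵥ (y - x)) k) ^ 2 :=
        sum_sq_le_sum_sub_sq_of_dotProduct_nonpos obtuse
    _ = ∑ k, ((A' *ᵥ x) k - b k) ^ 2 :=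
        Finset.sum_congr rfl fun k _ => congrArg (· ^ 2) (congrFun residual k).symm

end OrderedRing

section Separation

variable {m : Type*} [Fintype m]

theorem dotProduct_le_l2_mul_l2 (u v : m → ℝ) : u ⬝ᵥ v ≤ l2 u * l2 v :=
  Real.sum_mul_le_sqrt_mul_sqrt _ u v

theorem dotProduct_add_neg_smul_normalized_nonpos {u v w : m → ℝ} {σ D : ℝ} (hσ : 0 < σ)
    (hu : l2 u ≤ D) (hv : l2 v ≤ D) (huw : σ ≤ u ⬝ᵥ w / l2 w) :
    u ⬝ᵥ (v + fun k => -(D ^ 2 / σ) * (w k / l2 w)) ≤ 0 := by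
  have huv : u ⬝ᵥ v ≤ D ^ 2 := calc
    u ⬝ᵥ v ≤ l2 u * l2 v := dotProduct_le_l2_mul_l2 u v
    _ ≤ D * D := mul_le_mul hu hv (Real.sqrt_nonneg _) ((Real.sqrt_nonneg _).trans hu)
    _ = D ^ 2 := (sq D).symm
  have hub : D ^ 2 ≤ D ^ 2 / σ * (u ⬝ᵥ w / l2 w) := calc
    D ^ 2 = D ^ 2 / σ * σ := (div_mul_cancel₀ _ hσ.ne').symm
    _ ≤ D ^ 2 / σ * (u ⬝ᵥ w / l2 w) := by gcongr
  have shift : (u ⬝ᵥ fun k => -(D ^ 2 / σ) * (w k / l2 w)) = -(D ^ 2 / σ * (u ⬝ᵥ w / l2 w)) := by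
    simp only [dotProduct, Finset.sum_div, Finset.mul_sum, ← Finset.sum_neg_distrib]
    exact Finset.sum_congr rfl fun k _ => by ring
  rw [dotProduct_add, shift]
  linarith

end Separation

theorem svm_lasso_equal_optima_general {m ι : Type*} [Fintype m] [Fintype ι] [Nonempty ι]
    (A : Matrix m ι ℝ) (b : m → ℝ) (hAb : ∀ i j, Aᵀ i ⬝ᵥ (Aᵀ j + b) ≤ 0) :
    sInf {v : ℝ | ∃ x : ι → ℝ, (∑ i, |x i| ≤ 1) ∧
        v = ∑ k, (((A + replicateCol ι b) *ᵥ x) k - b k) ^ 2} =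
    sInf {v : ℝ | ∃ x : ι → ℝ, (∀ i, 0 ≤ x i) ∧ (∑ i, x i = 1) ∧
        v = ∑ k, (A *ᵥ x) k ^ 2} := by
  apply csInf_eq_csInf_of_forall_exists_le
  · rintro _ ⟨x, hx, rfl⟩
    have posPart_le_abs : ∀ i, (x i)⁺ ≤ |x i| := fun i => sup_le (le_abs_self _) (abs_nonneg _)
    have hx' : ∑ i, (x i)⁺ ≤ 1 := (Finset.sum_le_sum fun i _ => posPart_le_abs i).trans hx
    obtain ⟨y, hy, hxy⟩ := exists_mem_stdSimplex_ge hx'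
    exact ⟨_, ⟨y, hy.1, hy.2, rfl⟩, sum_sq_mulVec_le_sum_sq_residual hAb hy hxy⟩
  · rintro _ ⟨x, hx_nonneg, hx_sum, rfl⟩
    refine ⟨_, ⟨x, ?_, rfl⟩, le_of_eq ?_⟩
    · simp only [abs_of_nonneg (hx_nonneg _), hx_sum, le_refl]
    · simp only [add_replicateCol_mulVec, hx_sum, one_smul, Pi.add_apply, add_sub_cancel_right]

/-- SVM ⪯ Lasso, equality of optimal values: the constructed Lasso instance `(Ã, b̃)`
(with `b̃ = −(D²/σ)·w/‖w‖₂`, `Ã = A + b̃·1ᵀ`) has the same optimal value as the original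
SVM: `min_{‖x‖₁ ≤ 1} ‖Ãx − b̃‖₂² = min_{x ∈ Δ} ‖Ax‖₂²`. -/
theorem svm_lasso_equal_optima {d n : ℕ} (hn : 0 < n) (A : Matrix (Fin d) (Fin n) ℝ)
    (σ D : ℝ) (hσ : 0 < σ) (hD : 0 < D)
    (w : Fin d → ℝ) (hw : w ≠ 0)
    (hsep : ∀ i, (Aᵀ i) ⬝ᵥ w / l2 w ≥ σ)
    (hAD : ∀ i, l2 (Aᵀ i) < D) :
    let bt : Fin d → ℝ := fun k => -(D ^ 2 / σ) * (w k / l2 w)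
    let Atil : Matrix (Fin d) (Fin n) ℝ := Matrix.of fun k i => A k i + bt k
    sInf {v : ℝ | ∃ x : Fin n → ℝ, (∑ i, |x i| ≤ 1) ∧
        v = ∑ k, (Atil.mulVec x k - bt k) ^ 2} =
    sInf {v : ℝ | ∃ x : Fin n → ℝ, (∀ i, 0 ≤ x i) ∧ (∑ i, x i = 1) ∧
        v = ∑ k, (A.mulVec x k) ^ 2} := by
  have : Nonempty (Fin n) := ⟨⟨0, hn⟩⟩
  exact svm_lasso_equal_optima_general A _ fun i j =>
    dotProduct_add_neg_smul_normalized_nonpos hσ (hAD i).le (hAD j).le (hsep i)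
end
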